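/- Let b ∈ 𝒮((ℤⁿ)^p) with p ∈ ℕ, let P_j ∈ ℝ[X₁,…,Xₙ] be a homogeneous polynomial of degree j, let r ∈ ℕ₀, and let φ be a real-valued function on ℤⁿ × (ℤⁿ)^p. Define h(s,k,l) := b(l) P_j(k) e^{iφ(k,l)} / (|k|^{s+r} |k+l̂₁|² ⋯ |k+l̂_p|²), with the convention h(s,k,l) := 0 if k = 0 or one of the denominators vanishes. Then for every s ∈ ℂ with Re(s) > n + j − r − 2p, the family (h(s,k,l))_{(k,l)∈ℤⁿ×(ℤⁿ)^p} is absolutely summable; in particular Σ'_{k∈ℤⁿ} Σ_{l∈(ℤⁿ)^p} h(s,k,l) = Σ_{l∈(ℤⁿ)^p} Σ'_{k∈ℤⁿ} h(s,k,l). -/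

import Mathlib

noncomputable section

/-- Euclidean norm of an integer vector `k ∈ ℤⁿ`. -/
def znorm {n : ℕ} (k : Fin n → ℤ) : ℝ := Real.sqrt (∑ i, ((k i : ℝ)) ^ 2)

/-- Schwartz (rapidly decreasing) sequences on `(ℤⁿ)^p`. -/
def IsSchwartzSeq {p n : ℕ} (b : (Fin p → Fin n → ℤ) → ℂ) : Prop :=
  ∀ r : ℕ, ∃ C : ℝ, ∀ l : Fin p → Fin n → ℤ,
    (1 + ∑ i, ∑ a, ((l i a : ℝ)) ^ 2) ^ r * ‖b l‖ ^ 2 ≤ C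

/-- Partial sums `l̂ᵢ = l₁ + ⋯ + lᵢ` of a tuple `l ∈ (ℤⁿ)^p`. -/
def lhat {p n : ℕ} (l : Fin p → Fin n → ℤ) (i : Fin p) : Fin n → ℤ :=
  ∑ j ∈ Finset.Iic i, l j

/-- The term `h(s,k,l) = b(l) P_j(k) e^{iφ(k,l)} / (|k|^{s+r} |k+l̂₁|²⋯|k+l̂_p|²)`,
set to `0` when `k = 0` or one of the denominators vanishes. -/
def hTerm {n p : ℕ} (b : (Fin p → Fin n → ℤ) → ℂ) (Pj : MvPolynomial (Fin n) ℝ) (r : ℕ)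
    (φ : (Fin n → ℤ) → (Fin p → Fin n → ℤ) → ℝ) (s : ℂ) (k : Fin n → ℤ)
    (l : Fin p → Fin n → ℤ) : ℂ :=
  if k = 0 ∨ ∃ i : Fin p, k + lhat l i = 0 then 0
  else b l * ((MvPolynomial.eval (fun i => ((k i : ℤ) : ℝ)) Pj : ℝ) : ℂ) *
      Complex.exp (Complex.I * ((φ k l : ℝ) : ℂ)) /
    ((znorm k : ℂ) ^ (s + (r : ℂ)) * ∏ i : Fin p, ((znorm (k + lhat l i) : ℝ) : ℂ) ^ 2)

/-!
Off the excluded indices `|k + l̂ᵢ| ≥ 1`, because a nonzero integer vector has norm at least one, so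
the triangle inequality takes the multiplicative form `|k| ≤ (1 + |l̂ᵢ|) |k + l̂ᵢ|`. Together with
Cauchy–Schwarz, `(1 + |l̂ᵢ|)² ≤ (p + 1) (1 + |l|²)`, this trades each factor `|k + l̂ᵢ|⁻²` for
`|k|⁻²` at the cost of one power of `1 + |l|²`, and the family is dominated by a multiple of
`|k|^(deg P - Re s - r - 2p) · (1 + |l|²)^p |b(l)|`, a summable function of `k` times a summable
function of `l`.
-/

open Finset Module

section IntegerVectors

variable {ι : Type*}

/-- The inclusion of `ℤ^ι` into Euclidean space, which makes the norm inequalities of `ℝ^ι`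
available for integer vectors. -/
def intVec : (ι → ℤ) →+ EuclideanSpace ℝ ι where
  toFun k := WithLp.toLp 2 fun i => (k i : ℝ)
  map_zero' := by ext; simp
  map_add' k l := by ext; simp

lemma intVec_apply (k : ι → ℤ) (i : ι) : intVec k i = k i := rfl

variable [Fintype ι]

lemma norm_intVec_sq (k : ι → ℤ) : ‖intVec k‖ ^ 2 = ∑ i, (k i : ℝ) ^ 2 := by
  simp only [EuclideanSpace.real_norm_sq_eq, intVec_apply]

lemma znorm_eq_norm_intVec {n : ℕ} (k : Fin n → ℤ) : znorm k = ‖intVec k‖ := by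
  rw [znorm, ← norm_intVec_sq, Real.sqrt_sq (norm_nonneg _)]

lemma one_le_norm_intVec {k : ι → ℤ} (hk : k ≠ 0) : 1 ≤ ‖intVec k‖ := by
  obtain ⟨i, hi⟩ := Function.ne_iff.mp hk
  calc (1 : ℝ) ≤ |(k i : ℝ)| := mod_cast Int.one_le_abs hi
    _ ≤ ‖intVec k‖ := PiLp.norm_apply_le (intVec k) i

lemma summable_norm_intVec_rpow {r : ℝ} (hr : r < -Fintype.card ι) :
    Summable fun k : ι → ℤ => ‖intVec k‖ ^ r := by
  classical
  let e := (EuclideanSpace.basisFun ι ℝ).toBasis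
  let L := Submodule.span ℤ (Set.range e)
  have finrank_L : finrank ℤ L = Fintype.card ι := finrank_eq_card_basis (e.restrictScalars ℤ)
  have coe_equivFun_symm (k : ι → ℤ) :
      ((e.restrictScalars ℤ).equivFun.symm k : EuclideanSpace ℝ ι) = intVec k := by
    ext i
    simp only [Basis.equivFun_symm_apply, AddSubmonoidClass.coe_finsetSum, Submodule.coe_smul,
      Basis.restrictScalars_apply]
    simp [e, intVec_apply, Pi.single_apply]
  have summable_L := ZLattice.summable_norm_rpow L r (by rwa [finrank_L])
  simpa only [Function.comp_def, Submodule.coe_norm, LinearEquiv.coe_toEquiv, coe_equivFun_symm]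
    using summable_L.comp_injective (e.restrictScalars ℤ).equivFun.symm.injective

lemma summable_rpow_neg_one_add_norm_intVec_sq {r : ℝ} (hr : Fintype.card ι < r) :
    Summable fun k : ι → ℤ => (1 + ‖intVec k‖ ^ 2) ^ (-r / 2) := by
  have r_pos : 0 < r := (Nat.cast_nonneg _).trans_lt hr
  refine (summable_norm_intVec_rpow (neg_lt_neg hr)).of_norm_bounded_eventually ?_
  filter_upwards [(Set.finite_singleton (0 : ι → ℤ)).compl_mem_cofinite] with k hk
  have norm_pos : 0 < ‖intVec k‖ := one_pos.trans_le (one_le_norm_intVec hk)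
  calc ‖(1 + ‖intVec k‖ ^ 2) ^ (-r / 2)‖
      = (1 + ‖intVec k‖ ^ 2) ^ (-r / 2) := Real.norm_of_nonneg (by positivity)
    _ ≤ (‖intVec k‖ ^ 2) ^ (-r / 2) :=
        Real.rpow_le_rpow_of_nonpos (by positivity) (by linarith) (by linarith [r_pos])
    _ = ‖intVec k‖ ^ (-r) := by
        rw [← Real.rpow_natCast_mul norm_pos.le]
        congr 1
        push_cast
        ring

end IntegerVectors

section Tuples

variable {κ ι : Type*} [Fintype κ] [Fintype ι]

/-- The squared Japanese bracket `⟨l⟩² = 1 + |l|²` of a tuple of integer vectors, the weight in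
which the decay of a Schwartz sequence is measured. -/
def japaneseSq (l : κ → ι → ℤ) : ℝ := 1 + ∑ i, ∑ a, (l i a : ℝ) ^ 2

lemma japaneseSq_eq_sum_norm (l : κ → ι → ℤ) :
    japaneseSq l = 1 + ∑ i, ‖intVec (l i)‖ ^ 2 := by
  simp only [japaneseSq, norm_intVec_sq]

lemma japaneseSq_eq_norm_uncurry (l : κ → ι → ℤ) :
    japaneseSq l = 1 + ‖intVec (Function.uncurry l)‖ ^ 2 := by
  rw [japaneseSq, norm_intVec_sq, Fintype.sum_prod_type]
  rfl

lemma japaneseSq_pos (l : κ → ι → ℤ) : 0 < japaneseSq l := by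
  unfold japaneseSq
  positivity

lemma summable_japaneseSq_pow_inv {m : ℕ} (hm : Fintype.card κ * Fintype.card ι < 2 * m) :
    Summable fun l : κ → ι → ℤ => (japaneseSq l ^ m)⁻¹ := by
  have card_lt : (Fintype.card (κ × ι) : ℝ) < 2 * m := by
    rw [Fintype.card_prod]
    exact_mod_cast hm
  have summable_uncurry := (summable_rpow_neg_one_add_norm_intVec_sq card_lt).comp_injective
    (Equiv.curry κ ι ℤ).symm.injective
  refine summable_uncurry.congr fun l => ?_
  rw [Function.comp_apply, Equiv.curry_symm_apply, ← japaneseSq_eq_norm_uncurry, neg_div,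
    mul_div_cancel_left₀ _ two_ne_zero, Real.rpow_neg (japaneseSq_pos l).le, Real.rpow_natCast]

lemma IsSchwartzSeq.summable_japaneseSq_pow_mul_norm {p n : ℕ} {b : (Fin p → Fin n → ℤ) → ℂ}
    (hb : IsSchwartzSeq b) (m : ℕ) : Summable fun l => japaneseSq l ^ m * ‖b l‖ := by
  let q := m + (p * n + 1)
  obtain ⟨C, hC⟩ := hb (2 * q)
  have norm_le (l) : japaneseSq l ^ q * ‖b l‖ ≤ √C := by
    refine Real.le_sqrt_of_sq_le ?_
    rw [mul_pow, ← pow_mul, mul_comm q 2]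
    exact hC l
  have summable_inv : Summable fun l : Fin p → Fin n → ℤ => (japaneseSq l ^ (p * n + 1))⁻¹ :=
    summable_japaneseSq_pow_inv (by simp only [Fintype.card_fin]; lia)
  refine (summable_inv.mul_left √C).of_nonneg_of_le
    (fun l => mul_nonneg (pow_nonneg (japaneseSq_pos l).le m) (norm_nonneg _)) fun l => ?_
  rw [← div_eq_mul_inv, le_div_iff₀ (pow_pos (japaneseSq_pos l) _)]
  calc japaneseSq l ^ m * ‖b l‖ * japaneseSq l ^ (p * n + 1) = japaneseSq l ^ q * ‖b l‖ := by ring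
    _ ≤ √C := norm_le l

end Tuples

section ShiftedNorms

lemma norm_le_one_add_norm_mul_norm_add {E : Type*} [SeminormedAddGroup E] {v w : E}
    (h : 1 ≤ ‖v + w‖) : ‖v‖ ≤ (1 + ‖w‖) * ‖v + w‖ :=
  calc ‖v‖ ≤ ‖v + w‖ + ‖w‖ := norm_le_add_norm_add v w
    _ ≤ ‖v + w‖ + ‖w‖ * ‖v + w‖ := by gcongr; exact le_mul_of_one_le_right (norm_nonneg w) h
    _ = (1 + ‖w‖) * ‖v + w‖ := by ring

lemma one_add_sum_sq_le {κ : Type*} (s : Finset κ) (x : κ → ℝ) :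
    (1 + ∑ i ∈ s, x i) ^ 2 ≤ (#s + 1) * (1 + ∑ i ∈ s, x i ^ 2) := by
  simpa using sq_sum_le_card_mul_sum_sq (s := insertNone s) (f := fun o => o.elim 1 x)

variable {n p : ℕ}

lemma one_add_norm_lhat_sq_le (l : Fin p → Fin n → ℤ) (i : Fin p) :
    (1 + ‖intVec (lhat l i)‖) ^ 2 ≤ (p + 1) * japaneseSq l := by
  have norm_lhat_le : ‖intVec (lhat l i)‖ ≤ ∑ j, ‖intVec (l j)‖ := by
    rw [lhat, map_sum]
    exact (norm_sum_le _ _).trans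
      (sum_le_sum_of_subset_of_nonneg (subset_univ _) fun _ _ _ => norm_nonneg _)
  calc (1 + ‖intVec (lhat l i)‖) ^ 2 ≤ (1 + ∑ j, ‖intVec (l j)‖) ^ 2 := by gcongr
    _ ≤ (p + 1) * japaneseSq l := by
        simpa only [card_univ, Fintype.card_fin, japaneseSq_eq_sum_norm] using
          one_add_sum_sq_le univ fun j => ‖intVec (l j)‖

lemma znorm_sq_le_mul_znorm_add_lhat_sq {k : Fin n → ℤ} {l : Fin p → Fin n → ℤ} {i : Fin p}
    (h : k + lhat l i ≠ 0) :
    znorm k ^ 2 ≤ (p + 1) * japaneseSq l * znorm (k + lhat l i) ^ 2 := by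
  simp only [znorm_eq_norm_intVec, map_add]
  have one_le : 1 ≤ ‖intVec k + intVec (lhat l i)‖ := map_add intVec k _ ▸ one_le_norm_intVec h
  calc ‖intVec k‖ ^ 2
      ≤ ((1 + ‖intVec (lhat l i)‖) * ‖intVec k + intVec (lhat l i)‖) ^ 2 := by
        gcongr
        exact norm_le_one_add_norm_mul_norm_add one_le
    _ = (1 + ‖intVec (lhat l i)‖) ^ 2 * ‖intVec k + intVec (lhat l i)‖ ^ 2 := mul_pow _ _ _
    _ ≤ (p + 1) * japaneseSq l * ‖intVec k + intVec (lhat l i)‖ ^ 2 := by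
        gcongr
        exact one_add_norm_lhat_sq_le l i

lemma znorm_pow_le_mul_prod_znorm_add_lhat_sq {k : Fin n → ℤ} {l : Fin p → Fin n → ℤ}
    (h : ∀ i, k + lhat l i ≠ 0) :
    znorm k ^ (2 * p) ≤ ((p + 1) * japaneseSq l) ^ p * ∏ i, znorm (k + lhat l i) ^ 2 :=
  calc znorm k ^ (2 * p) = ∏ _i : Fin p, znorm k ^ 2 := by simp [pow_mul]
    _ ≤ ∏ i, (p + 1) * japaneseSq l * znorm (k + lhat l i) ^ 2 :=
        prod_le_prod (fun _ _ => sq_nonneg _) fun i _ => znorm_sq_le_mul_znorm_add_lhat_sq (h i)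
    _ = ((p + 1) * japaneseSq l) ^ p * ∏ i, znorm (k + lhat l i) ^ 2 := by
        simp [prod_mul_distrib]

end ShiftedNorms

section Domination

lemma norm_eval_le_sum_norm_coeff_mul_pow {σ R : Type*} [NormedCommRing R] [NormOneClass R]
    (P : MvPolynomial σ R) {x : σ → R} {M : ℝ} (hM : 1 ≤ M) (hx : ∀ i, ‖x i‖ ≤ M) :
    ‖MvPolynomial.eval x P‖ ≤ (∑ d ∈ P.support, ‖P.coeff d‖) * M ^ P.totalDegree := by
  rw [MvPolynomial.eval_eq, sum_mul]
  refine (norm_sum_le _ _).trans (sum_le_sum fun d hd => (norm_mul_le _ _).trans ?_)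
  gcongr
  calc ‖∏ i ∈ d.support, x i ^ d i‖
      ≤ ∏ i ∈ d.support, ‖x i ^ d i‖ := norm_prod_le _ _
    _ ≤ ∏ i ∈ d.support, M ^ d i := by
        gcongr with i
        exact (norm_pow_le _ _).trans (by gcongr; exact hx i)
    _ = M ^ d.sum fun _ e => e := prod_pow_eq_pow_sum _ _ _
    _ ≤ M ^ P.totalDegree := pow_le_pow_right₀ hM (MvPolynomial.le_totalDegree hd)

variable {n p : ℕ}

lemma norm_hTerm_of_ne_zero (b : (Fin p → Fin n → ℤ) → ℂ) (P : MvPolynomial (Fin n) ℝ) (r : ℕ)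
    (φ : (Fin n → ℤ) → (Fin p → Fin n → ℤ) → ℝ) (s : ℂ) {k : Fin n → ℤ} {l : Fin p → Fin n → ℤ}
    (hk : k ≠ 0) (hkl : ∀ i, k + lhat l i ≠ 0) :
    ‖hTerm b P r φ s k l‖ = ‖b l‖ * ‖MvPolynomial.eval (fun i => (k i : ℝ)) P‖ /
      (znorm k ^ (s.re + r) * ∏ i, znorm (k + lhat l i) ^ 2) := by
  have znorm_pos : 0 < znorm k := by
    rw [znorm_eq_norm_intVec]
    exact one_pos.trans_le (one_le_norm_intVec hk)
  rw [hTerm, if_neg (by simp [hk, hkl])]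
  simp [Complex.norm_exp_I_mul_ofReal, Complex.norm_cpow_eq_rpow_re_of_pos znorm_pos]

lemma norm_hTerm_le (b : (Fin p → Fin n → ℤ) → ℂ) (P : MvPolynomial (Fin n) ℝ) (r : ℕ)
    (φ : (Fin n → ℤ) → (Fin p → Fin n → ℤ) → ℝ) (s : ℂ) (k : Fin n → ℤ)
    (l : Fin p → Fin n → ℤ) :
    ‖hTerm b P r φ s k l‖ ≤ ((∑ d ∈ P.support, ‖P.coeff d‖) * (p + 1) ^ p) *
      (‖intVec k‖ ^ (P.totalDegree - (s.re + r) - 2 * p) * (japaneseSq l ^ p * ‖b l‖)) := by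
  have J_pos := japaneseSq_pos l
  set J := japaneseSq l
  set A := ∑ d ∈ P.support, ‖P.coeff d‖
  by_cases hzero : k = 0 ∨ ∃ i, k + lhat l i = 0
  · rw [hTerm, if_pos hzero, norm_zero]
    positivity
  push Not at hzero
  obtain ⟨hk, hkl⟩ := hzero
  have one_le := one_le_norm_intVec hk
  have prod_ge := znorm_pow_le_mul_prod_znorm_add_lhat_sq hkl
  rw [norm_hTerm_of_ne_zero b P r φ s hk hkl]
  rw [znorm_eq_norm_intVec] at prod_ge ⊢
  set K := ‖intVec k‖
  have K_pos : 0 < K := one_pos.trans_le one_le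
  have eval_le : ‖MvPolynomial.eval (fun i => (k i : ℝ)) P‖ ≤ A * K ^ P.totalDegree :=
    norm_eval_le_sum_norm_coeff_mul_pow P one_le fun i => PiLp.norm_apply_le (intVec k) i
  calc ‖b l‖ * ‖MvPolynomial.eval (fun i => (k i : ℝ)) P‖ /
        (K ^ (s.re + r) * ∏ i, znorm (k + lhat l i) ^ 2)
      ≤ ‖b l‖ * (A * K ^ P.totalDegree) /
        (K ^ (s.re + r) * (K ^ (2 * p) / ((p + 1) * J) ^ p)) := by
        gcongr
        exact (div_le_iff₀' (by positivity)).mpr prod_ge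
    _ = A * (p + 1) ^ p *
        (K ^ P.totalDegree / K ^ (s.re + r) / K ^ (2 * p) * (J ^ p * ‖b l‖)) := by
        rw [mul_pow]
        field_simp
    _ = A * (p + 1) ^ p * (K ^ (P.totalDegree - (s.re + r) - 2 * p) * (J ^ p * ‖b l‖)) := by
        rw [Real.rpow_sub K_pos, Real.rpow_sub K_pos, Real.rpow_natCast]
        norm_cast

end Domination

theorem hTerm_abs_summable_general {n p : ℕ} {b : (Fin p → Fin n → ℤ) → ℂ}
    (hb : Summable fun l => japaneseSq l ^ p * ‖b l‖) (P : MvPolynomial (Fin n) ℝ) (r : ℕ)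
    (φ : (Fin n → ℤ) → (Fin p → Fin n → ℤ) → ℝ) {s : ℂ}
    (hs : (n : ℝ) + P.totalDegree - r - 2 * p < s.re) :
    Summable (fun kl : (Fin n → ℤ) × (Fin p → Fin n → ℤ) => ‖hTerm b P r φ s kl.1 kl.2‖) ∧
    (∑' k, ∑' l, hTerm b P r φ s k l) = ∑' l, ∑' k, hTerm b P r φ s k l := by
  have summable_k : Summable fun k : Fin n → ℤ =>
      ‖intVec k‖ ^ (P.totalDegree - (s.re + r) - 2 * p) :=
    summable_norm_intVec_rpow (by rw [Fintype.card_fin]; linarith)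
  have dominating_summable := (summable_k.mul_of_nonneg hb
    (fun _ => Real.rpow_nonneg (norm_nonneg _) _)
    fun l => mul_nonneg (pow_nonneg (japaneseSq_pos l).le p) (norm_nonneg _)).mul_left
      ((∑ d ∈ P.support, ‖P.coeff d‖) * (p + 1) ^ p)
  have abs_summable : Summable fun kl : (Fin n → ℤ) × (Fin p → Fin n → ℤ) =>
      ‖hTerm b P r φ s kl.1 kl.2‖ :=
    dominating_summable.of_nonneg_of_le (fun _ => norm_nonneg _)
      fun kl => norm_hTerm_le b P r φ s kl.1 kl.2
  refine ⟨abs_summable, ?_⟩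
  have uncurry_summable : Summable (Function.uncurry (hTerm b P r φ s)) := abs_summable.of_norm
  exact uncurry_summable.tsum_comm.symm

/-- **Lemma.** For `b ∈ 𝒮((ℤⁿ)^p)`, `P_j` homogeneous of degree `j`, `r ∈ ℕ₀` and a
real phase `φ`, the family `h(s,k,l)` is absolutely summable over
`(k,l) ∈ ℤⁿ × (ℤⁿ)^p` whenever `Re s > n + j − r − 2p`; in particular the two
iterated sums coincide. -/
theorem hTerm_abs_summable (n p : ℕ) (hn : 0 < n) (hp : 0 < p) (j r : ℕ)
    (b : (Fin p → Fin n → ℤ) → ℂ) (hb : IsSchwartzSeq b)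
    (Pj : MvPolynomial (Fin n) ℝ) (hPj : Pj.IsHomogeneous j)
    (φ : (Fin n → ℤ) → (Fin p → Fin n → ℤ) → ℝ)
    (s : ℂ) (hs : (n : ℝ) + (j : ℝ) - (r : ℝ) - 2 * (p : ℝ) < s.re) :
    Summable (fun kl : (Fin n → ℤ) × (Fin p → Fin n → ℤ) =>
      ‖hTerm b Pj r φ s kl.1 kl.2‖) ∧
    (∑' k : Fin n → ℤ, ∑' l : Fin p → Fin n → ℤ, hTerm b Pj r φ s k l) =
      ∑' l : Fin p → Fin n → ℤ, ∑' k : Fin n → ℤ, hTerm b Pj r φ s k l :=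
  hTerm_abs_summable_general (hb.summable_japaneseSq_pow_mul_norm p) Pj r φ
    (hs.trans_le' (by gcongr; exact hPj.totalDegree_le))

end
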